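/- Let N ≥ 2, c > 0, and let D be a nonempty convex set of Borel probability measures on [0,1]^N. Let ℓ_1, ℓ_2, … be a semi-adversarial loss sequence constrained by D and let (w_t) be the FTRL-CARL weights with parameter c (so w_t depends only on ℓ_1,…,ℓ_{t−1}). Then for every t ∈ ℕ, every expert i ∈ [N] with Δ_i > 0, and every p > 0: E[ (w_t(i))^p ] ≤ 2·exp( −t·( p·c² / (2·(√2 + c·√p)²) )·Δ_i² ). -/

import Mathlib

open MeasureTheory ProbabilityTheory

/-- The error function `erf(z) = (2/√π)∫_0^z e^{-u²} du`. -/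
noncomputable def erf (z : ℝ) : ℝ :=
  2 / Real.sqrt Real.pi * ∫ u in (0 : ℝ)..z, Real.exp (-u ^ 2)

/-- `h_B(x) = x·√(2·log(1/x)) − √(π/2)·erf(√(log(1/x))) + x·(N−1)·√(π/2)` for `x ∈ (0,1]`,
with `h_B(0) = −√(π/2)`. -/
noncomputable def hB (N : ℕ) (x : ℝ) : ℝ :=
  if x = 0 then -Real.sqrt (Real.pi / 2)
  else x * Real.sqrt (2 * Real.log (1 / x))
    - Real.sqrt (Real.pi / 2) * erf (Real.sqrt (Real.log (1 / x)))
    + x * ((N : ℝ) - 1) * Real.sqrt (Real.pi / 2)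

noncomputable def HB {N : ℕ} (w : Fin N → ℝ) : ℝ := ∑ i, hB N (w i)

/-- FTRL-CARL with parameter `c > 0`:
`w_{t+1} ∈ argmin_{w ∈ Δ_N} { ⟨L_t, w⟩ − (√(t+1)/c)·H_B(w) }` with `L_t = Σ_{s=1}^t ℓ_s`. -/
def IsCarl (N : ℕ) (c : ℝ) (ℓ : ℕ → Fin N → ℝ) (w : ℕ → Fin N → ℝ) : Prop :=
  ∀ t : ℕ, w (t + 1) ∈ stdSimplex ℝ (Fin N) ∧
    ∀ v ∈ stdSimplex ℝ (Fin N),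
      (∑ i, (∑ s ∈ Finset.Icc 1 t, ℓ s i) * w (t + 1) i)
          - Real.sqrt ((t : ℝ) + 1) / c * HB (w (t + 1)) ≤
        (∑ i, (∑ s ∈ Finset.Icc 1 t, ℓ s i) * v i)
          - Real.sqrt ((t : ℝ) + 1) / c * HB v

/-- A semi-adversarial loss sequence constrained by `D`. -/
def IsSemiAdv {Ω : Type*} [MeasurableSpace Ω] (μ : Measure Ω) [IsFiniteMeasure μ]
    {N : ℕ} (D : Set (Measure (Fin N → ℝ))) (ℓ : ℕ → Ω → Fin N → ℝ) : Prop :=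
  (∀ t, Measurable (ℓ t)) ∧ (∀ t ω i, ℓ t ω i ∈ Set.Icc (0 : ℝ) 1) ∧
    ∀ t : ℕ, ∀ᵐ ω ∂μ,
      condDistrib (ℓ (t + 1)) (fun ω' (s : Fin t) => ℓ ((s : ℕ) + 1) ω') μ
        (fun s : Fin t => ℓ ((s : ℕ) + 1) ω) ∈ D

/-- The effective stochastic gap `Δ_i = inf_{λ∈D} max_{j∈[N]} E_{ℓ∼λ}[ℓ(i) − ℓ(j)]`. -/
noncomputable def gap {N : ℕ} (D : Set (Measure (Fin N → ℝ))) (i : Fin N) : ℝ :=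
  sInf ((fun lam => sSup (Set.range fun j : Fin N => ∫ v, (v i - v j) ∂lam)) '' D)

/-!
Sion's minimax theorem turns the gap into a single mixture `q` of experts: for every `λ ∈ D`,
expert `i` loses on average at least `Δ_i` more than `q` does. On the simplex the linear part of
`h_B` contributes a constant, and the rest has derivative `√(2 log (1/x))`. Moving a little mass
from `i` to `j` at the minimiser therefore shows `L(i) - L(j) ≤ (√t / c) √(2 log (1 / w_t(i)))`.
Averaging over `j ∼ q` and applying Young's inequality, for every `θ ≥ 0`,
`w_t(i)^p ≤ exp (θ² t / (2 p c²) - θ (L(i) - ⟨q, L⟩))`.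
The exponential moment on the right is bounded round by round with Hoeffding's lemma, conditionally
on the past, and `θ = Δ_i p c² / (1 + p c²)` minimises the exponent up to a term at most `1 / 2`.
-/

section ErrorFunction

open Filter Topology

lemma hasDerivAt_erf (z : ℝ) :
    HasDerivAt erf (2 / √Real.pi * Real.exp (-z ^ 2)) z := by
  have hcont : Continuous fun u : ℝ => Real.exp (-u ^ 2) := by fun_prop
  exact (intervalIntegral.integral_hasDerivAt_right (hcont.intervalIntegrable 0 z)
    (hcont.stronglyMeasurableAtFilter _ _) hcont.continuousAt).const_mul _

lemma continuous_erf : Continuous erf :=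
  continuous_iff_continuousAt.2 fun z => (hasDerivAt_erf z).continuousAt

lemma monotone_erf : Monotone erf :=
  monotone_of_hasDerivAt_nonneg hasDerivAt_erf fun _ => by positivity

lemma tendsto_erf_atTop : Tendsto erf atTop (𝓝 1) := by
  have hint : IntegrableOn (fun u : ℝ => Real.exp (-u ^ 2)) (Set.Ioi 0) := by
    simpa using (integrable_exp_neg_mul_sq one_pos).integrableOn (s := Set.Ioi 0)
  have hval : ∫ u in Set.Ioi (0 : ℝ), Real.exp (-u ^ 2) = √Real.pi / 2 := by
    simpa using integral_gaussian_Ioi 1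
  have htends := (intervalIntegral_tendsto_integral_Ioi 0 hint tendsto_id).const_mul (2 / √Real.pi)
  have hpi : √Real.pi ≠ 0 := by positivity
  rwa [hval, show 2 / √Real.pi * (√Real.pi / 2) = 1 by field_simp] at htends

lemma erf_le_one (z : ℝ) : erf z ≤ 1 :=
  monotone_erf.ge_of_tendsto tendsto_erf_atTop z

end ErrorFunction

section Regularizer

lemma hB_eq_hB_one_add (N : ℕ) (x : ℝ) :
    hB N x = hB 1 x + (N - 1) * √(Real.pi / 2) * x := by
  unfold hB
  split_ifs with hx
  · simp [hx]
  · push_cast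
    ring

lemma hB_one_of_pos {x : ℝ} (hx : 0 < x) :
    hB 1 x = x * √(2 * -Real.log x) - √(Real.pi / 2) * erf (√(-Real.log x)) := by
  simp [hB, hx.ne']

lemma hasDerivAt_hB_one {x : ℝ} (hx : 0 < x) (hx1 : x < 1) :
    HasDerivAt (hB 1) (√(2 * -Real.log x)) x := by
  have hlog : 0 < -Real.log x := neg_pos.2 (Real.log_neg hx hx1)
  have hneglog : HasDerivAt (fun y => -Real.log y) (-x⁻¹) x := (Real.hasDerivAt_log hx.ne').neg
  have herf := (hasDerivAt_erf _).comp x (hneglog.sqrt hlog.ne')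
  have hsqrt := (hneglog.const_mul 2).sqrt (by positivity)
  refine HasDerivAt.congr_of_eventuallyEq ?_
    (Filter.eventually_of_mem (Ioi_mem_nhds hx) fun y hy => hB_one_of_pos hy)
  refine (((hasDerivAt_id x).mul hsqrt).sub (herf.const_mul √(Real.pi / 2))).congr_deriv ?_
  have hexp : Real.exp (-√(-Real.log x) ^ 2) = x := by
    rw [Real.sq_sqrt hlog.le, neg_neg, Real.exp_log hx]
  have hsqrt_ne : √(-Real.log x) ≠ 0 := (Real.sqrt_pos.2 hlog).ne'
  rw [hexp, Real.sqrt_mul zero_le_two, Real.sqrt_div Real.pi_pos.le]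
  simp only [id]
  field_simp [hsqrt_ne]
  rw [Real.sq_sqrt zero_le_two]
  ring

lemma continuousOn_hB_one : ContinuousOn (hB 1) (Set.Ioi 0) := by
  have hlog : ContinuousOn (fun x => -Real.log x) (Set.Ioi 0) :=
    (Real.continuousOn_log.mono fun x hx => (Set.mem_Ioi.1 hx).ne').neg
  refine ContinuousOn.congr ?_ fun x hx => hB_one_of_pos hx
  exact (continuousOn_id.mul (hlog.const_mul 2).sqrt).sub
    ((continuous_erf.comp_continuousOn hlog.sqrt).const_mul _)

lemma hB_one_sub_le {x y : ℝ} (hx : 0 < x) (hxy : x ≤ y) (hy : y ≤ 1) :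
    hB 1 y - hB 1 x ≤ √(2 * -Real.log x) * (y - x) := by
  have hderiv : ∀ z ∈ interior (Set.Icc x y), HasDerivAt (hB 1) (√(2 * -Real.log z)) z := by
    rw [interior_Icc]
    exact fun z hz => hasDerivAt_hB_one (hx.trans hz.1) (hz.2.trans_le hy)
  refine (convex_Icc x y).image_sub_le_mul_sub_of_deriv_le
    (continuousOn_hB_one.mono fun z hz => hx.trans_le hz.1)
    (fun z hz => (hderiv z hz).differentiableAt.differentiableWithinAt) (fun z hz => ?_)
    x (Set.left_mem_Icc.2 hxy) y (Set.right_mem_Icc.2 hxy) hxy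
  rw [(hderiv z hz).deriv]
  have hxz : x ≤ z := (interior_subset hz).1
  gcongr

lemma monotoneOn_hB_one : MonotoneOn (hB 1) (Set.Icc 0 1) := by
  have hpos : MonotoneOn (hB 1) (Set.Ioc 0 1) := by
    refine monotoneOn_of_deriv_nonneg (convex_Ioc 0 1)
      (continuousOn_hB_one.mono Set.Ioc_subset_Ioi_self) ?_ ?_ <;> rw [interior_Ioc]
    · exact fun z hz => (hasDerivAt_hB_one hz.1 hz.2).differentiableAt.differentiableWithinAt
    · intro z hz
      rw [(hasDerivAt_hB_one hz.1 hz.2).deriv]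
      positivity
  intro x hx y hy hxy
  obtain rfl | hx0 := hx.1.eq_or_lt
  · obtain rfl | hy0 := hy.1.eq_or_lt
    · rfl
    · have hsqrt : 0 ≤ y * √(2 * -Real.log y) := by positivity
      have herf := mul_le_of_le_one_right (Real.sqrt_nonneg (Real.pi / 2))
        (erf_le_one √(-Real.log y))
      rw [hB_one_of_pos hy0, hB, if_pos rfl]
      linarith
  · exact hpos ⟨hx0, hx.2⟩ ⟨hx0.trans_le hxy, hy.2⟩ hxy

end Regularizer

section Simplex

variable {ι : Type*} [Fintype ι]

lemma add_single_sub_single_mem_stdSimplex [DecidableEq ι] {w : ι → ℝ} (hw : w ∈ stdSimplex ℝ ι)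
    {i j : ι} (hij : i ≠ j) {δ : ℝ} (hδ : 0 ≤ δ) (hδi : δ ≤ w i) :
    w + Pi.single j δ - Pi.single i δ ∈ stdSimplex ℝ ι := by
  refine ⟨fun k => ?_, by simp [Finset.sum_add_distrib, hw.2]⟩
  obtain rfl | hki := eq_or_ne k i
  · simpa [Pi.single_eq_of_ne hij] using hδi
  · have hsingle : (0 : ι → ℝ) ≤ Pi.single j δ := Pi.single_nonneg.2 hδ
    simpa [Pi.single_eq_of_ne hki] using add_nonneg (hw.1 k) (hsingle k)

lemma add_le_of_isMinOn_stdSimplex {F : ι → ℝ → ℝ} {w : ι → ℝ} (hw : w ∈ stdSimplex ℝ ι)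
    (hmin : IsMinOn (fun v => ∑ k, F k (v k)) (stdSimplex ℝ ι) w) {i j : ι} (hij : i ≠ j)
    {δ : ℝ} (hδ : 0 ≤ δ) (hδi : δ ≤ w i) :
    F i (w i) + F j (w j) ≤ F i (w i - δ) + F j (w j + δ) := by
  classical
  set v := w + Pi.single j δ - Pi.single i δ with hv
  have hvi : v i = w i - δ := by simp [hv, Pi.single_eq_of_ne hij]
  have hvj : v j = w j + δ := by simp [hv, Pi.single_eq_of_ne hij.symm]
  have hdiff : ∑ k, (F k (v k) - F k (w k)) = F i (v i) - F i (w i) + (F j (v j) - F j (w j)) := by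
    refine Fintype.sum_eq_add i j hij fun k hk => ?_
    simp [hv, Pi.single_eq_of_ne hk.1, Pi.single_eq_of_ne hk.2]
  have hle : ∑ k, F k (w k) ≤ ∑ k, F k (v k) :=
    hmin (add_single_sub_single_mem_stdSimplex hw hij hδ hδi)
  rw [Finset.sum_sub_distrib, hvi, hvj] at hdiff
  linarith

lemma dotProduct_le_of_mem_stdSimplex {q : ι → ℝ} (hq : q ∈ stdSimplex ℝ ι) {x : ι → ℝ} {a : ℝ}
    (hx : ∀ j, x j ≤ a) : q ⬝ᵥ x ≤ a :=
  calc q ⬝ᵥ x ≤ ∑ j, q j * a :=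
        Finset.sum_le_sum fun j _ => mul_le_mul_of_nonneg_left (hx j) (hq.1 j)
    _ = a := by rw [← Finset.sum_mul, hq.2, one_mul]

lemma le_dotProduct_of_mem_stdSimplex {q : ι → ℝ} (hq : q ∈ stdSimplex ℝ ι) {x : ι → ℝ} {a : ℝ}
    (hx : ∀ j, a ≤ x j) : a ≤ q ⬝ᵥ x :=
  calc a = ∑ j, q j * a := by rw [← Finset.sum_mul, hq.2, one_mul]
    _ ≤ q ⬝ᵥ x := Finset.sum_le_sum fun j _ => mul_le_mul_of_nonneg_left (hx j) (hq.1 j)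

end Simplex

section ExcessLoss

variable {ι : Type*}

/-- The vector of differences `v i - v j`, `j : ι`: the excess losses of expert `i` over each
expert when the losses of a round are `v`. -/
def excessLoss (i : ι) (v : ι → ℝ) : ι → ℝ := fun j => v i - v j

lemma excessLoss_sum {S : Type*} (s : Finset S) (v : S → ι → ℝ) (i : ι) :
    excessLoss i (∑ k ∈ s, v k) = ∑ k ∈ s, excessLoss i (v k) := by
  ext j
  simp [excessLoss]

lemma continuous_excessLoss (i : ι) : Continuous (excessLoss i) := by
  unfold excessLoss
  fun_prop

lemma excessLoss_mem_Icc {v : ι → ℝ} (hv : ∀ k, v k ∈ Set.Icc (0 : ℝ) 1) (i j : ι) :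
    excessLoss i v j ∈ Set.Icc (-1 : ℝ) 1 := by
  obtain ⟨hi₀, hi₁⟩ := hv i
  obtain ⟨hj₀, hj₁⟩ := hv j
  constructor <;> simp only [excessLoss] <;> linarith

variable [Fintype ι]

lemma norm_excessLoss_le_one {v : ι → ℝ} (hv : ∀ k, v k ∈ Set.Icc (0 : ℝ) 1) (i : ι) :
    ‖excessLoss i v‖ ≤ 1 :=
  (pi_norm_le_iff_of_nonneg zero_le_one).2 fun j => abs_le.2 (excessLoss_mem_Icc hv i j)

lemma dotProduct_excessLoss_mem_Icc {v q : ι → ℝ} (hv : ∀ k, v k ∈ Set.Icc (0 : ℝ) 1)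
    (hq : q ∈ stdSimplex ℝ ι) (i : ι) : q ⬝ᵥ excessLoss i v ∈ Set.Icc (-1 : ℝ) 1 :=
  ⟨le_dotProduct_of_mem_stdSimplex hq fun j => (excessLoss_mem_Icc hv i j).1,
    dotProduct_le_of_mem_stdSimplex hq fun j => (excessLoss_mem_Icc hv i j).2⟩

lemma integrable_excessLoss {lam : Measure (ι → ℝ)} [IsFiniteMeasure lam]
    (hlam : ∀ᵐ v ∂lam, ∀ k, v k ∈ Set.Icc (0 : ℝ) 1) (i : ι) : Integrable (excessLoss i) lam :=
  .of_bound (continuous_excessLoss i).aestronglyMeasurable 1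
    (hlam.mono fun _ hv => norm_excessLoss_le_one hv i)

lemma norm_integral_excessLoss_le_one {lam : Measure (ι → ℝ)} [IsProbabilityMeasure lam]
    (hlam : ∀ᵐ v ∂lam, ∀ k, v k ∈ Set.Icc (0 : ℝ) 1) (i : ι) :
    ‖∫ v, excessLoss i v ∂lam‖ ≤ 1 := by
  simpa using norm_integral_le_of_norm_le_const
    (hlam.mono fun v hv => norm_excessLoss_le_one hv i)

end ExcessLoss

section FTRL

variable {N : ℕ} {L w : Fin N → ℝ} {η : ℝ}

lemma mul_sub_le_of_isMinOn_HB (hη : 0 ≤ η) (hw : w ∈ stdSimplex ℝ (Fin N))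
    (hmin : IsMinOn (fun v => L ⬝ᵥ v - η * HB v) (stdSimplex ℝ (Fin N)) w) {i j : Fin N}
    (hij : i ≠ j) {x : ℝ} (hx : 0 < x) (hxw : x ≤ w i) :
    (L i - L j) * (w i - x) ≤ η * √(2 * -Real.log x) * (w i - x) := by
  have hsum : w i + w j ≤ 1 := by
    rw [← hw.2]
    exact Finset.add_le_sum (fun k _ => hw.1 k) (Finset.mem_univ i) (Finset.mem_univ j) hij
  have hwj : 0 ≤ w j := hw.1 j
  have hsep : (fun v : Fin N → ℝ => L ⬝ᵥ v - η * HB v) =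
      fun v => ∑ k, (L k * v k - η * hB N (v k)) := by
    funext v
    simp only [dotProduct, HB, Finset.mul_sum, Finset.sum_sub_distrib]
  have hshift := add_le_of_isMinOn_stdSimplex (F := fun k y => L k * y - η * hB N y) hw
    (hsep ▸ hmin) hij (δ := w i - x) (by linarith) (by linarith)
  simp only [hB_eq_hB_one_add N] at hshift
  have hslope := hB_one_sub_le hx hxw (by linarith)
  have hmono : hB 1 (w j) ≤ hB 1 (w j + (w i - x)) :=
    monotoneOn_hB_one ⟨hwj, by linarith⟩ ⟨by linarith, by linarith⟩ (by linarith)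
  have hgain : η * (hB 1 (w i) - hB 1 x + (hB 1 (w j) - hB 1 (w j + (w i - x)))) ≤
      η * (√(2 * -Real.log x) * (w i - x)) := by
    gcongr
    linarith
  rw [sub_sub_cancel] at hshift
  linarith

lemma sub_le_of_isMinOn_HB (hη : 0 ≤ η) (hw : w ∈ stdSimplex ℝ (Fin N))
    (hmin : IsMinOn (fun v => L ⬝ᵥ v - η * HB v) (stdSimplex ℝ (Fin N)) w) {i : Fin N}
    (hi : 0 < w i) (j : Fin N) : L i - L j ≤ η * √(2 * -Real.log (w i)) := by
  obtain rfl | hij := eq_or_ne i j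
  · rw [sub_self]
    positivity
  have hcont : ContinuousAt (fun x => η * √(2 * -Real.log x)) (w i) :=
    (((Real.continuousAt_log hi.ne').neg.const_mul 2).sqrt).const_mul η
  refine ge_of_tendsto (hcont.tendsto.mono_left (nhdsWithin_le_nhds (s := Set.Iio (w i)))) ?_
  filter_upwards [Ioo_mem_nhdsLT hi] with x hx
  exact le_of_mul_le_mul_right (mul_sub_le_of_isMinOn_HB hη hw hmin hij hx.1 hx.2.le)
    (sub_pos.2 hx.2)

lemma rpow_le_exp_of_isMinOn_HB (hη : 0 ≤ η) (hw : w ∈ stdSimplex ℝ (Fin N))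
    (hmin : IsMinOn (fun v => L ⬝ᵥ v - η * HB v) (stdSimplex ℝ (Fin N)) w) {q : Fin N → ℝ}
    (hq : q ∈ stdSimplex ℝ (Fin N)) {p θ : ℝ} (hp : 0 < p) (hθ : 0 ≤ θ) (i : Fin N) :
    w i ^ p ≤ Real.exp ((θ * η) ^ 2 / (2 * p) - θ * q ⬝ᵥ excessLoss i L) := by
  obtain hi | hi := (hw.1 i).eq_or_lt
  · rw [← hi, Real.zero_rpow hp.ne']
    positivity
  set s := √(2 * -Real.log (w i)) with hs
  have hlog : Real.log (w i) = -(s ^ 2 / 2) := by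
    have := Real.log_nonpos hi.le (mem_Icc_of_mem_stdSimplex hw i).2
    rw [hs, Real.sq_sqrt (by linarith)]
    ring
  have hregret : q ⬝ᵥ excessLoss i L ≤ η * s :=
    dotProduct_le_of_mem_stdSimplex hq (sub_le_of_isMinOn_HB hη hw hmin hi)
  have hyoung : θ * (η * s) ≤ (θ * η) ^ 2 / (2 * p) + s ^ 2 / 2 * p := by
    have hsq : 0 ≤ (θ * η - p * s) ^ 2 / (2 * p) := by positivity
    have hexpand : (θ * η - p * s) ^ 2 / (2 * p) =
        (θ * η) ^ 2 / (2 * p) + s ^ 2 / 2 * p - θ * (η * s) := by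
      field_simp
      ring
    linarith
  have hscaled := mul_le_mul_of_nonneg_left hregret hθ
  rw [Real.rpow_def_of_pos hi, hlog]
  gcongr
  linarith

end FTRL

section Minimax

variable {ι : Type*} [Fintype ι]

lemma exists_mem_stdSimplex_forall_le_dotProduct {C : Set (ι → ℝ)} (hne : C.Nonempty)
    (hconv : Convex ℝ C) (hbdd : Bornology.IsBounded C) {a : ℝ} (ha : ∀ x ∈ C, ∃ j, a ≤ x j) :
    ∃ q ∈ stdSimplex ℝ ι, ∀ x ∈ C, a ≤ q ⬝ᵥ x := by
  classical
  have hclosed : IsClosed {x : ι → ℝ | ∃ j, a ≤ x j} := by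
    rw [Set.ofPred_exists]
    exact isClosed_iUnion_of_finite fun j => isClosed_le continuous_const (continuous_apply j)
  have hclosure : ∀ x ∈ closure C, ∃ j, a ≤ x j := closure_minimal ha hclosed
  have hsimplex : (stdSimplex ℝ ι).Nonempty :=
    let ⟨x, hx⟩ := hne
    let ⟨j, _⟩ := ha x hx
    ⟨_, single_mem_stdSimplex ℝ j⟩
  let B : (ι → ℝ) →ₗ[ℝ] (ι → ℝ) →ₗ[ℝ] ℝ := dotProductBilin ℝ ℝ
  obtain ⟨x, hx, q, hq, hsaddle⟩ := Sion.exists_isSaddlePointOn (X := closure C)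
    (Y := stdSimplex ℝ ι) (f := fun x q => B q x) hne.closure hconv.closure
    hbdd.isCompact_closure
    (fun q _ => (B q).continuous_of_finiteDimensional.lowerSemicontinuous.lowerSemicontinuousOn _)
    (fun q _ => ((B q).convexOn hconv.closure).quasiconvexOn)
    (convex_stdSimplex ℝ ι) hsimplex (isCompact_stdSimplex ℝ ι)
    (fun x _ =>
      (B.flip x).continuous_of_finiteDimensional.upperSemicontinuous.upperSemicontinuousOn _)
    (fun x _ => ((B.flip x).concaveOn (convex_stdSimplex ℝ ι)).quasiconcaveOn)
  refine ⟨q, hq, fun y hy => ?_⟩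
  obtain ⟨j, hj⟩ := hclosure x hx
  calc a ≤ x j := hj
    _ = Pi.single j 1 ⬝ᵥ x := (single_one_dotProduct j x).symm
    _ ≤ q ⬝ᵥ y := hsaddle y (subset_closure hy) _ (single_mem_stdSimplex ℝ j)

lemma convex_ennreal_of_forall_le_one {E : Type*} [AddCommMonoid E] [SMul ENNReal E] {s : Set E}
    (h : ∀ x ∈ s, ∀ y ∈ s, ∀ a : ENNReal, a ≤ 1 → a • x + (1 - a) • y ∈ s) :
    Convex ENNReal s := by
  intro x hx y hy a b _ _ hab
  have ha : a ≤ 1 := hab ▸ le_self_add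
  rw [ENNReal.eq_sub_of_add_eq' ENNReal.one_ne_top ((add_comm b a).trans hab)]
  exact h x hx y hy a ha

lemma convex_image_integral {α E : Type*} [MeasurableSpace α] [NormedAddCommGroup E]
    [NormedSpace ℝ E] {D : Set (Measure α)} (hD : Convex ENNReal D) {f : α → E}
    (hf : ∀ lam ∈ D, Integrable f lam) : Convex ℝ ((fun lam => ∫ x, f x ∂lam) '' D) := by
  rintro _ ⟨lam₁, h₁, rfl⟩ _ ⟨lam₂, h₂, rfl⟩ a b ha hb hab
  refine ⟨ENNReal.ofReal a • lam₁ + ENNReal.ofReal b • lam₂,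
    hD h₁ h₂ zero_le zero_le ?_, ?_⟩
  · rw [← ENNReal.ofReal_add ha hb, hab, ENNReal.ofReal_one]
  · simp only
    rw [integral_add_measure ((hf _ h₁).smul_measure ENNReal.ofReal_ne_top)
      ((hf _ h₂).smul_measure ENNReal.ofReal_ne_top), integral_smul_measure, integral_smul_measure,
      ENNReal.toReal_ofReal ha, ENNReal.toReal_ofReal hb]

lemma dotProduct_integral {α : Type*} [MeasurableSpace α] {μ : Measure α}
    {f : α → ι → ℝ} (hf : Integrable f μ) (q : ι → ℝ) :
    q ⬝ᵥ ∫ x, f x ∂μ = ∫ x, q ⬝ᵥ f x ∂μ :=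
  ((dotProductBilin ℝ ℝ q).toContinuousLinearMap.integral_comp_comm hf).symm

end Minimax

section Gap

variable {N : ℕ} {D : Set (Measure (Fin N → ℝ))}

lemma sSup_range_integral_sub_nonneg (lam : Measure (Fin N → ℝ)) (i : Fin N) :
    0 ≤ sSup (Set.range fun j => ∫ v, (v i - v j) ∂lam) :=
  le_csSup_of_le (Set.finite_range _).bddAbove ⟨i, rfl⟩ (by simp)

lemma gap_nonneg (D : Set (Measure (Fin N → ℝ))) (i : Fin N) : 0 ≤ gap D i :=
  Real.sInf_nonneg <| Set.forall_mem_image.2 fun lam _ => sSup_range_integral_sub_nonneg lam i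

lemma exists_gap_le_integral {lam : Measure (Fin N → ℝ)} (hlam : lam ∈ D) (i : Fin N) :
    ∃ j, gap D i ≤ ∫ v, (v i - v j) ∂lam := by
  have : Nonempty (Fin N) := ⟨i⟩
  obtain ⟨j, hj⟩ := exists_eq_ciSup_of_finite (f := fun j => ∫ v, (v i - v j) ∂lam)
  refine ⟨j, hj ▸ csInf_le ⟨0, ?_⟩ ⟨lam, hlam, rfl⟩⟩
  exact Set.forall_mem_image.2 fun lam _ => sSup_range_integral_sub_nonneg lam i

lemma exists_gap_le_integral_excessLoss {lam : Measure (Fin N → ℝ)} [IsFiniteMeasure lam]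
    (hlam : lam ∈ D) (hsupp : ∀ᵐ v ∂lam, ∀ k, v k ∈ Set.Icc (0 : ℝ) 1) (i : Fin N) :
    ∃ j, gap D i ≤ (∫ v, excessLoss i v ∂lam) j := by
  obtain ⟨j, hj⟩ := exists_gap_le_integral hlam i
  refine ⟨j, hj.trans_eq ?_⟩
  exact (ContinuousLinearMap.proj (R := ℝ) j).integral_comp_comm (integrable_excessLoss hsupp i)

variable (hD : D.Nonempty)
  (hDprob : ∀ lam ∈ D, IsProbabilityMeasure lam ∧ ∀ᵐ v ∂lam, ∀ i, v i ∈ Set.Icc (0 : ℝ) 1)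
include hD hDprob

lemma gap_le_one (i : Fin N) : gap D i ≤ 1 := by
  obtain ⟨lam, hlam⟩ := hD
  obtain ⟨_, hsupp⟩ := hDprob lam hlam
  obtain ⟨j, hj⟩ := exists_gap_le_integral_excessLoss hlam hsupp i
  calc gap D i ≤ (∫ v, excessLoss i v ∂lam) j := hj
    _ ≤ ‖∫ v, excessLoss i v ∂lam‖ := (Real.le_norm_self _).trans (norm_le_pi_norm _ j)
    _ ≤ 1 := norm_integral_excessLoss_le_one hsupp i

lemma exists_mem_stdSimplex_forall_gap_le (hconv : Convex ENNReal D) (i : Fin N) :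
    ∃ q ∈ stdSimplex ℝ (Fin N), ∀ lam ∈ D, gap D i ≤ ∫ v, q ⬝ᵥ excessLoss i v ∂lam := by
  have hint : ∀ lam ∈ D, Integrable (excessLoss i) lam := fun lam hlam =>
    have ⟨_, hsupp⟩ := hDprob lam hlam
    integrable_excessLoss hsupp i
  obtain ⟨q, hq, hgap⟩ := exists_mem_stdSimplex_forall_le_dotProduct (a := gap D i)
    (hD.image fun lam => ∫ v, excessLoss i v ∂lam) (convex_image_integral hconv hint)
    (isBounded_iff_forall_norm_le.2 ⟨1, Set.forall_mem_image.2 fun lam hlam =>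
      have ⟨_, hsupp⟩ := hDprob lam hlam
      norm_integral_excessLoss_le_one hsupp i⟩)
    (Set.forall_mem_image.2 fun lam hlam =>
      have ⟨_, hsupp⟩ := hDprob lam hlam
      exists_gap_le_integral_excessLoss hlam hsupp i)
  refine ⟨q, hq, fun lam hlam => ?_⟩
  rw [← dotProduct_integral (hint lam hlam)]
  exact hgap _ ⟨lam, hlam, rfl⟩

end Gap

section Concentration

variable {Ω : Type*} [MeasurableSpace Ω] {μ : Measure Ω}

lemma mgf_le_of_mem_Icc [IsProbabilityMeasure μ] {X : Ω → ℝ} (hX : AEMeasurable X μ) {a b : ℝ}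
    (hab : ∀ᵐ ω ∂μ, X ω ∈ Set.Icc a b) (t : ℝ) :
    mgf X μ t ≤ Real.exp (t * ∫ ω, X ω ∂μ + (b - a) ^ 2 * t ^ 2 / 8) := by
  have hcentered := (hasSubgaussianMGF_of_mem_Icc hX hab).mgf_le t
  have hconst : (((‖b - a‖₊ / 2) ^ 2 : NNReal) : ℝ) * t ^ 2 / 2 = (b - a) ^ 2 * t ^ 2 / 8 := by
    push_cast
    rw [div_pow, Real.norm_eq_abs, sq_abs]
    ring
  have hmean : mgf X μ t =
      Real.exp (t * ∫ ω, X ω ∂μ) * mgf (fun ω => X ω - ∫ ω, X ω ∂μ) μ t := by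
    rw [← mgf_const_add]
    simp
  rw [hconst] at hcentered
  rw [hmean, Real.exp_add]
  gcongr

lemma lintegral_exp_neg_mul_le_of_mem_Icc [IsProbabilityMeasure μ] {X : Ω → ℝ}
    (hX : AEMeasurable X μ) {a b : ℝ} (hab : ∀ᵐ ω ∂μ, X ω ∈ Set.Icc a b) {m : ℝ}
    (hm : m ≤ ∫ ω, X ω ∂μ) {θ : ℝ} (hθ : 0 ≤ θ) :
    ∫⁻ ω, ENNReal.ofReal (Real.exp (-θ * X ω)) ∂μ ≤
      ENNReal.ofReal (Real.exp (-θ * m + (b - a) ^ 2 * θ ^ 2 / 8)) := by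
  rw [← ofReal_integral_eq_lintegral_ofReal (integrable_exp_mul_of_mem_Icc hX hab)
    (.of_forall fun ω => (Real.exp_pos _).le)]
  refine ENNReal.ofReal_le_ofReal ((mgf_le_of_mem_Icc hX hab (-θ)).trans ?_)
  rw [neg_sq]
  refine Real.exp_le_exp.2 ?_
  linarith [mul_le_mul_of_nonneg_left hm hθ]

lemma lintegral_mul_comp_le_of_condDistrib {α β : Type*} [MeasurableSpace α] [MeasurableSpace β]
    [StandardBorelSpace β] [Nonempty β] [IsFiniteMeasure μ] {X : Ω → α} {Y : Ω → β}
    (hX : Measurable X) (hY : Measurable Y) {f : α → ENNReal} (hf : Measurable f)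
    {g : β → ENNReal} (hg : Measurable g) {C : ENNReal}
    (hC : ∀ᵐ ω ∂μ, ∫⁻ y, g y ∂(condDistrib Y X μ (X ω)) ≤ C) :
    ∫⁻ ω, f (X ω) * g (Y ω) ∂μ ≤ (∫⁻ ω, f (X ω) ∂μ) * C := by
  have hfg : Measurable fun z : α × β => f z.1 * g z.2 := by fun_prop
  calc ∫⁻ ω, f (X ω) * g (Y ω) ∂μ
      = ∫⁻ z, f z.1 * g z.2 ∂(μ.map fun ω => (X ω, Y ω)) := by
        rw [lintegral_map hfg (hX.prodMk hY)]
    _ = ∫⁻ x, f x * ∫⁻ y, g y ∂(condDistrib Y X μ x) ∂(μ.map X) := by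
        rw [← compProd_map_condDistrib hY.aemeasurable, Measure.lintegral_compProd hfg]
        simp only [lintegral_const_mul _ hg]
    _ = ∫⁻ ω, f (X ω) * ∫⁻ y, g y ∂(condDistrib Y X μ (X ω)) ∂μ :=
        lintegral_map (hf.mul hg.lintegral_kernel) hX
    _ ≤ ∫⁻ ω, f (X ω) * C ∂μ := lintegral_mono_ae (hC.mono fun ω hω => by gcongr)
    _ = (∫⁻ ω, f (X ω) ∂μ) * C := lintegral_mul_const _ (hf.comp hX)

lemma IsSemiAdv.lintegral_prod_le [IsProbabilityMeasure μ] {N : ℕ}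
    {D : Set (Measure (Fin N → ℝ))} {ℓ : ℕ → Ω → Fin N → ℝ} (hsa : IsSemiAdv μ D ℓ)
    {g : (Fin N → ℝ) → ENNReal} (hg : Measurable g) {C : ENNReal}
    (hC : ∀ lam ∈ D, ∫⁻ v, g v ∂lam ≤ C) (n : ℕ) :
    ∫⁻ ω, ∏ s ∈ Finset.Icc 1 n, g (ℓ s ω) ∂μ ≤ C ^ n := by
  obtain ⟨hmeas, -, hcond⟩ := hsa
  induction n with
  | zero => simp
  | succ n ih =>
    have hprod : ∀ ω, ∏ s ∈ Finset.Icc 1 n, g (ℓ s ω) = ∏ s : Fin n, g (ℓ (s + 1) ω) := by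
      intro ω
      rw [Fin.prod_univ_eq_prod_range (fun s => g (ℓ (s + 1) ω)) n, Finset.range_eq_Ico,
        Finset.prod_Ico_add' (fun s => g (ℓ s ω)) 0 n 1]
      rfl
    calc ∫⁻ ω, ∏ s ∈ Finset.Icc 1 (n + 1), g (ℓ s ω) ∂μ
        = ∫⁻ ω, (∏ s : Fin n, g (ℓ (s + 1) ω)) * g (ℓ (n + 1) ω) ∂μ := by
          simp only [Finset.prod_Icc_succ_top (Nat.le_add_left 1 n), hprod]
      _ ≤ (∫⁻ ω, ∏ s : Fin n, g (ℓ (s + 1) ω) ∂μ) * C :=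
          lintegral_mul_comp_le_of_condDistrib (X := fun ω (s : Fin n) => ℓ (s + 1) ω)
            (f := fun x => ∏ s, g (x s)) (by fun_prop) (hmeas _) (by fun_prop) hg
            ((hcond n).mono fun ω hω => hC _ hω)
      _ ≤ C ^ (n + 1) := by
          rw [pow_succ]
          gcongr
          simpa only [hprod] using ih

end Concentration

section Rate

variable {Ω : Type*} [MeasurableSpace Ω] {μ : Measure Ω} {N : ℕ} {c p : ℝ}

lemma IsCarl.isMinOn {ℓ w : ℕ → Fin N → ℝ} (h : IsCarl N c ℓ w) (n : ℕ) :
    IsMinOn (fun v => (∑ s ∈ Finset.Icc 1 n, ℓ s) ⬝ᵥ v - √((n : ℝ) + 1) / c * HB v)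
      (stdSimplex ℝ (Fin N)) (w (n + 1)) := by
  intro v hv
  simpa only [dotProduct, Finset.sum_apply, Set.mem_ofPred_eq] using (h n).2 v hv

lemma IsCarl.rpow_le {ℓ w : ℕ → Fin N → ℝ} (h : IsCarl N c ℓ w) (hc : 0 < c) (hp : 0 < p)
    {q : Fin N → ℝ} (hq : q ∈ stdSimplex ℝ (Fin N)) {θ : ℝ} (hθ : 0 ≤ θ) (n : ℕ) (i : Fin N) :
    w (n + 1) i ^ p ≤ Real.exp (θ ^ 2 * (n + 1) / (2 * (p * c ^ 2))) *
      ∏ s ∈ Finset.Icc 1 n, Real.exp (-θ * q ⬝ᵥ excessLoss i (ℓ s)) := by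
  refine (rpow_le_exp_of_isMinOn_HB (by positivity) (h n).1 (h.isMinOn n) hq hp hθ i).trans_eq ?_
  rw [← Real.exp_sum, ← Real.exp_add, ← Finset.mul_sum, ← dotProduct_sum, ← excessLoss_sum,
    mul_pow, div_pow, Real.sq_sqrt (by positivity)]
  congr 1
  field_simp
  ring

lemma integral_le_of_lintegral_ofReal_le {f : Ω → ℝ} (hf : 0 ≤ f) {C : ℝ} (hC : 0 ≤ C)
    (h : ∫⁻ ω, ENNReal.ofReal (f ω) ∂μ ≤ ENNReal.ofReal C) : ∫ ω, f ω ∂μ ≤ C := by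
  refine (Real.le_norm_self _).trans
    ((norm_integral_le_lintegral_norm f).trans (ENNReal.toReal_le_of_le_ofReal hC ?_))
  simpa only [Real.norm_of_nonneg (hf _)] using h

variable [IsProbabilityMeasure μ] {D : Set (Measure (Fin N → ℝ))} {ℓ w : ℕ → Ω → Fin N → ℝ}

lemma IsSemiAdv.integral_rpow_le_exp (hsa : IsSemiAdv μ D ℓ) (hD : D.Nonempty)
    (hDprob : ∀ lam ∈ D, IsProbabilityMeasure lam ∧ ∀ᵐ v ∂lam, ∀ i, v i ∈ Set.Icc (0 : ℝ) 1)
    (hconv : Convex ENNReal D) (hcarl : ∀ ω, IsCarl N c (fun t => ℓ t ω) (fun t => w t ω))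
    (hc : 0 < c) (hp : 0 < p) {θ : ℝ} (hθ : 0 ≤ θ) (n : ℕ) (i : Fin N) :
    ∫ ω, w (n + 1) ω i ^ p ∂μ ≤ Real.exp
      (θ ^ 2 * (n + 1) / (2 * (p * c ^ 2)) + n * (-θ * gap D i + θ ^ 2 / 2)) := by
  obtain ⟨q, hq, hgap⟩ := exists_mem_stdSimplex_forall_gap_le hD hDprob hconv i
  have hcont : Continuous fun v => q ⬝ᵥ excessLoss i v :=
    continuous_const.dotProduct (continuous_excessLoss i)
  set g : (Fin N → ℝ) → ENNReal := fun v => .ofReal (Real.exp (-θ * q ⬝ᵥ excessLoss i v))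
  have hg : Measurable g := (hcont.const_mul (-θ)).rexp.measurable.ennreal_ofReal
  have hround : ∀ lam ∈ D, ∫⁻ v, g v ∂lam ≤ .ofReal (Real.exp (-θ * gap D i + θ ^ 2 / 2)) := by
    intro lam hlam
    obtain ⟨_, hsupp⟩ := hDprob lam hlam
    convert lintegral_exp_neg_mul_le_of_mem_Icc hcont.measurable.aemeasurable
      (hsupp.mono fun v hv => dotProduct_excessLoss_mem_Icc hv hq i) (hgap lam hlam) hθ using 4
    ring
  refine integral_le_of_lintegral_ofReal_le
    (fun ω => Real.rpow_nonneg ((hcarl ω n).1.1 i) p) (Real.exp_pos _).le ?_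
  set K := θ ^ 2 * (n + 1) / (2 * (p * c ^ 2))
  calc ∫⁻ ω, ENNReal.ofReal (w (n + 1) ω i ^ p) ∂μ
      ≤ ∫⁻ ω, ENNReal.ofReal (Real.exp K) * ∏ s ∈ Finset.Icc 1 n, g (ℓ s ω) ∂μ := by
        refine lintegral_mono fun ω => ?_
        rw [← ENNReal.ofReal_prod_of_nonneg fun _ _ => (Real.exp_pos _).le,
          ← ENNReal.ofReal_mul (Real.exp_pos _).le]
        exact ENNReal.ofReal_le_ofReal ((hcarl ω).rpow_le hc hp hq hθ n i)
    _ ≤ ENNReal.ofReal (Real.exp K) *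
          ENNReal.ofReal (Real.exp (-θ * gap D i + θ ^ 2 / 2)) ^ n := by
        rw [lintegral_const_mul' _ _ ENNReal.ofReal_ne_top]
        gcongr
        exact hsa.lintegral_prod_le hg hround n
    _ = ENNReal.ofReal (Real.exp (K + n * (-θ * gap D i + θ ^ 2 / 2))) := by
        rw [← ENNReal.ofReal_pow (Real.exp_pos _).le, ← Real.exp_nat_mul,
          ← ENNReal.ofReal_mul (Real.exp_pos _).le, ← Real.exp_add]

lemma exponent_optimal_eq {b : ℝ} (hb : 0 < b) (n G : ℝ) :
    (G * b / (1 + b)) ^ 2 * (n + 1) / (2 * b) +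
        n * (-(G * b / (1 + b)) * G + (G * b / (1 + b)) ^ 2 / 2) =
      -(n + 1) * (b / (2 * (1 + b))) * G ^ 2 + (G ^ 2 - (G - G * b / (1 + b)) ^ 2) / 2 := by
  field_simp
  ring

lemma exp_half_le_two : Real.exp (1 / 2) ≤ 2 := by
  refine (Real.le_log_iff_exp_le two_pos).1 ?_
  linarith [Real.log_two_gt_d9]

lemma div_sq_sqrt_add_le (hc : 0 < c) (hp : 0 < p) :
    p * c ^ 2 / (2 * (√2 + c * √p) ^ 2) ≤ p * c ^ 2 / (2 * (1 + p * c ^ 2)) := by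
  gcongr
  calc 1 + p * c ^ 2 ≤ √2 ^ 2 + (c * √p) ^ 2 := by
        rw [mul_pow, Real.sq_sqrt zero_le_two, Real.sq_sqrt hp.le]
        linarith
    _ ≤ (√2 + c * √p) ^ 2 := by
        have : 0 ≤ √2 * (c * √p) := by positivity
        linarith [add_sq √2 (c * √p)]

lemma exp_half_mul_exp_le (hc : 0 < c) (hp : 0 < p) (t : ℕ) (G : ℝ) :
    Real.exp (1 / 2) * Real.exp (-t * (p * c ^ 2 / (2 * (1 + p * c ^ 2))) * G ^ 2) ≤
      2 * Real.exp (-t * (p * c ^ 2 / (2 * (√2 + c * √p) ^ 2)) * G ^ 2) := by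
  have hrate := div_sq_sqrt_add_le hc hp
  simp only [neg_mul]
  gcongr
  exact exp_half_le_two

end Rate

theorem stmt15_general {Ω : Type*} [MeasurableSpace Ω] {μ : Measure Ω} [IsProbabilityMeasure μ]
    {N : ℕ} {c : ℝ} (hc : 0 < c) {D : Set (Measure (Fin N → ℝ))} (hD : D.Nonempty)
    (hDprob : ∀ lam ∈ D, IsProbabilityMeasure lam ∧ ∀ᵐ v ∂lam, ∀ i, v i ∈ Set.Icc (0 : ℝ) 1)
    (hconv : Convex ENNReal D) {ℓ : ℕ → Ω → Fin N → ℝ} (hsa : IsSemiAdv μ D ℓ)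
    {w : ℕ → Ω → Fin N → ℝ} (hcarl : ∀ ω, IsCarl N c (fun t => ℓ t ω) (fun t => w t ω))
    {t : ℕ} (ht : 1 ≤ t) (i : Fin N) {p : ℝ} (hp : 0 < p) :
    ∫ ω, w t ω i ^ p ∂μ ≤
      Real.exp (1 / 2) * Real.exp (-t * (p * c ^ 2 / (2 * (1 + p * c ^ 2))) * gap D i ^ 2) := by
  obtain ⟨n, rfl⟩ := Nat.exists_eq_add_of_le' ht
  have hb : 0 < p * c ^ 2 := by positivity
  have hgap : 0 ≤ gap D i := gap_nonneg D i
  have hgap_sq : gap D i ^ 2 ≤ 1 := pow_le_one₀ hgap (gap_le_one hD hDprob i)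
  refine (hsa.integral_rpow_le_exp hD hDprob hconv hcarl hc hp
    (θ := gap D i * (p * c ^ 2) / (1 + p * c ^ 2)) (by positivity) n i).trans ?_
  rw [exponent_optimal_eq hb, ← Real.exp_add]
  refine Real.exp_le_exp.2 ?_
  push_cast
  linarith [sq_nonneg (gap D i - gap D i * (p * c ^ 2) / (1 + p * c ^ 2))]

/-- for a semi-adversarial loss sequence constrained by `D` and FTRL-CARL
weights with parameter `c`, for every round `t ≥ 1`, expert `i` with `Δ_i > 0`, and `p > 0`:
`E[(w_t(i))^p] ≤ 2·exp(−t·(p·c²/(2·(√2 + c·√p)²))·Δ_i²)`. -/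
theorem stmt15 {Ω : Type*} [MeasurableSpace Ω] (μ : Measure Ω) [IsProbabilityMeasure μ]
    (N : ℕ) (hN : 2 ≤ N) (c : ℝ) (hc : 0 < c)
    (D : Set (Measure (Fin N → ℝ))) (hD : D.Nonempty)
    (hDprob : ∀ lam ∈ D, IsProbabilityMeasure lam ∧ ∀ᵐ v ∂lam, ∀ i, v i ∈ Set.Icc (0 : ℝ) 1)
    (hDconv : ∀ lam₁ ∈ D, ∀ lam₂ ∈ D, ∀ a : ENNReal, a ≤ 1 →
      a • lam₁ + (1 - a) • lam₂ ∈ D)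
    (ℓ : ℕ → Ω → Fin N → ℝ) (hsa : IsSemiAdv μ D ℓ)
    (w : ℕ → Ω → Fin N → ℝ) (hwmeas : ∀ t, Measurable (w t))
    (hwadapt : ∀ t (ω ω' : Ω), (∀ s, 1 ≤ s → s ≤ t → ℓ s ω = ℓ s ω') →
      w (t + 1) ω = w (t + 1) ω')
    (hcarl : ∀ ω, IsCarl N c (fun t => ℓ t ω) (fun t => w t ω))
    (t : ℕ) (ht : 1 ≤ t) (i : Fin N) (hi : 0 < gap D i) (p : ℝ) (hp : 0 < p) :
    ∫ ω, w t ω i ^ p ∂μ ≤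
      2 * Real.exp (-(t : ℝ) * (p * c ^ 2 / (2 * (Real.sqrt 2 + c * Real.sqrt p) ^ 2))
        * gap D i ^ 2) := by
  exact (stmt15_general hc hD hDprob (convex_ennreal_of_forall_le_one hDconv) hsa hcarl ht i
    hp).trans (exp_half_mul_exp_le hc hp t _)
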